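/- arXiv:2305.03240 — 4 statements merged into one kernel-verified Lean document; each statement's English description precedes it below -/
import Mathlib

section
/- Let G be a finite tree (a connected acyclic simple graph) on n ≥ 2 vertices in which every vertex has degree at most 3. Then G contains an edge e = {u,v} such that, after deleting e from G, the connected component containing u and the connected component containing v each have at most ⌈2n/3⌉ vertices. -/
/-!
In a tree on `n` vertices with degrees at most `d + 1`, call the two components left by deleting an
edge `uv` its branches, and suppose that one of them, say the one at `u`, has more than `k`
vertices. It consists of `u` and, for each of the at most `d` other neighbours `x` of `u`, the
branch at `x` of the edge `ux`. These cannot all be small, so for some `x` the branch at `u` of `ux`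
has at most `k` vertices. Either `ux` is balanced, or its branch at `x` again has more than `k`
vertices; that branch is strictly contained in the one at `u` of `uv`, so the descent stops.
All this needs is `d * (n - 1) < (d + 1) * k`. The least such `k` is optimal, as shown by `d + 1`
paths of equal length attached to a common vertex.
-/

open SimpleGraph

/-- The branch of `G` at `u` away from `v`: the vertices still reachable from `u` once the edge
`uv` is deleted. It is defined for all pairs, and is the component of `u` when `u` and `v` are not
adjacent. -/
def branch {V : Type*} (G : SimpleGraph V) (u v : V) : Set V :=
  {w | (G.deleteEdges {s(u, v)}).Reachable u w}

section Branch

variable {V : Type*} {G H : SimpleGraph V} {u v w x : V}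

theorem mem_branch_self (G : SimpleGraph V) (u v : V) : u ∈ branch G u v :=
  Reachable.refl u

theorem branch_swap (G : SimpleGraph V) (u v : V) :
    branch G v u = {w | (G.deleteEdges {s(u, v)}).Reachable v w} := by
  rw [branch, Sym2.eq_swap]

theorem reachable_deleteEdges_of_notMem_support (hHG : H ≤ G) (p : H.Walk x w)
    (hu : u ∉ p.support) (v : V) : (G.deleteEdges {s(u, v)}).Reachable x w := by
  have huv : s(u, v) ∉ p.edges := fun h ↦ hu (p.fst_mem_support_of_mem_edges h)
  exact (p.toDeleteEdge s(u, v) huv).reachable.mono (deleteEdges_mono hHG)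

theorem exists_adj_walk_notMem_support (huw : G.Reachable u w) (hne : w ≠ u) :
    ∃ x, G.Adj u x ∧ ∃ p : G.Walk x w, u ∉ p.support := by
  obtain ⟨p, hp⟩ := huw.exists_isPath
  cases p with
  | nil => exact absurd rfl hne
  | cons hux q => exact ⟨_, hux, q, ((Walk.cons_isPath_iff hux q).1 hp).2⟩

theorem deleteEdges_singleton_adj_of_ne (hux : G.Adj u x) (hxv : x ≠ v) :
    (G.deleteEdges {s(u, v)}).Adj u x := by
  rw [deleteEdges_adj, Set.mem_singleton_iff, Sym2.congr_right]
  exact ⟨hux, hxv⟩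

theorem disjoint_branch (huv : G.IsBridge s(u, v)) :
    Disjoint (branch G u v) (branch G v u) := by
  rw [branch_swap G u v, Set.disjoint_left]
  exact fun w hu hv ↦ isBridge_iff.1 huv (hu.trans hv.symm)

theorem branch_union_branch (hG : G.Preconnected) (u v : V) :
    branch G u v ∪ branch G v u = Set.univ := by
  refine Set.eq_univ_of_forall fun w ↦ ?_
  obtain rfl | hwu := eq_or_ne w u
  · exact .inl (mem_branch_self G w v)
  obtain ⟨x, hux, p, hp⟩ := exists_adj_walk_notMem_support (hG u w) hwu
  have hxw := reachable_deleteEdges_of_notMem_support le_rfl p hp v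
  obtain rfl | hxv := eq_or_ne x v
  · exact .inr ((branch_swap G u x).symm ▸ hxw)
  · exact .inl ((deleteEdges_singleton_adj_of_ne hux hxv).reachable.trans hxw)

theorem branch_subset_branch (hbridge : G.IsBridge s(x, u)) (hux : G.Adj u x) (hxv : x ≠ v) :
    branch G x u ⊆ branch G u v := by
  classical
  rintro w ⟨p⟩
  have hu : u ∉ p.support := fun hu ↦ isBridge_iff.1 hbridge (p.takeUntil u hu).reachable
  exact (deleteEdges_singleton_adj_of_ne hux hxv).reachable.trans
    (reachable_deleteEdges_of_notMem_support (deleteEdges_le _) p hu v)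

theorem branch_ssubset_branch (hbridge : G.IsBridge s(x, u)) (hux : G.Adj u x) (hxv : x ≠ v) :
    branch G x u ⊂ branch G u v :=
  (Set.ssubset_iff_of_subset (branch_subset_branch hbridge hux hxv)).2
    ⟨u, mem_branch_self G u v, isBridge_iff.1 hbridge⟩

theorem branch_subset_insert_biUnion (G : SimpleGraph V) (u v : V) :
    branch G u v ⊆ insert u (⋃ x ∈ G.neighborSet u \ {v}, branch G x u) := by
  intro w hw
  obtain rfl | hwu := eq_or_ne w u
  · exact Set.mem_insert w _
  obtain ⟨x, hux, p, hp⟩ := exists_adj_walk_notMem_support hw hwu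
  obtain ⟨hadj, hne⟩ := deleteEdges_adj.1 hux
  have hxv : x ≠ v := fun h ↦ hne (h ▸ rfl)
  have hwx : w ∈ branch G x u := by
    rw [branch_swap G u x]
    exact reachable_deleteEdges_of_notMem_support (deleteEdges_le _) p hp x
  exact .inr (Set.mem_biUnion ⟨hadj, hxv⟩ hwx)

end Branch

section Finite

variable {V : Type*} [Finite V] {G : SimpleGraph V} {d k : ℕ}

theorem ncard_branch_add_ncard_branch {u v : V} (hT : G.IsTree) (huv : G.Adj u v) :
    (branch G u v).ncard + (branch G v u).ncard = Nat.card V := by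
  have hbridge := isAcyclic_iff_forall_adj_isBridge.1 hT.isAcyclic huv
  rw [← Set.ncard_union_eq (disjoint_branch hbridge),
    branch_union_branch hT.connected.preconnected, Set.ncard_univ]

theorem ncard_branch_le [G.LocallyFinite] {u v : V} {m : ℕ} (huv : G.Adj u v)
    (hdeg : G.degree u ≤ d + 1) (hm : ∀ x, G.Adj u x → x ≠ v → (branch G x u).ncard ≤ m) :
    (branch G u v).ncard ≤ d * m + 1 := by
  classical
  let children := (G.neighborFinset u).erase v
  have hcover : branch G u v ⊆ insert u (⋃ x ∈ children, branch G x u) := by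
    simpa [children, and_comm] using branch_subset_insert_biUnion G u v
  have hchildren : children.card ≤ d := by
    rw [Finset.card_erase_of_mem ((G.mem_neighborFinset u v).2 huv), card_neighborFinset_eq_degree]
    lia
  have hsum : ∑ x ∈ children, (branch G x u).ncard ≤ children.card * m :=
    Finset.sum_le_card_nsmul children _ m fun x hx ↦
      hm x ((G.mem_neighborFinset u x).1 (Finset.mem_of_mem_erase hx)) (Finset.ne_of_mem_erase hx)
  calc (branch G u v).ncard
      ≤ (insert u (⋃ x ∈ children, branch G x u)).ncard := Set.ncard_le_ncard hcover
    _ ≤ (⋃ x ∈ children, branch G x u).ncard + 1 := Set.ncard_insert_le _ _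
    _ ≤ ∑ x ∈ children, (branch G x u).ncard + 1 := by
        gcongr; exact children.set_ncard_biUnion_le _
    _ ≤ d * m + 1 := by grw [hsum, hchildren]

theorem exists_adj_ncard_branch_le [G.LocallyFinite] {u v : V} (hT : G.IsTree)
    (huv : G.Adj u v) (hdeg : G.degree u ≤ d + 1) (hk : d * (Nat.card V - 1) < (d + 1) * k)
    (hlarge : k < (branch G u v).ncard) :
    ∃ x, G.Adj u x ∧ x ≠ v ∧ (branch G u x).ncard ≤ k := by
  by_contra! hno
  have hsmall : ∀ x, G.Adj u x → x ≠ v → (branch G x u).ncard ≤ Nat.card V - 1 - k := by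
    intro x hux hxv
    have := ncard_branch_add_ncard_branch hT hux
    have := hno x hux hxv
    lia
  have hle : k ≤ d * (Nat.card V - 1 - k) := by
    have := ncard_branch_le huv hdeg hsmall
    lia
  have hkn : k ≤ Nat.card V - 1 := by
    have := Set.ncard_le_card (branch G u v)
    lia
  have : (d + 1) * k ≤ d * (Nat.card V - 1) :=
    calc (d + 1) * k = k + d * k := by ring
      _ ≤ d * (Nat.card V - 1 - k) + d * k := by gcongr
      _ = d * (Nat.card V - 1) := by rw [← Nat.mul_add, Nat.sub_add_cancel hkn]
  lia

theorem exists_adj_ncard_branch_le_and_le_of_lt [G.LocallyFinite] (hT : G.IsTree)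
    (hdeg : ∀ w, G.degree w ≤ d + 1) (hk : d * (Nat.card V - 1) < (d + 1) * k)
    {u v : V} (huv : G.Adj u v) (hlarge : k < (branch G u v).ncard) :
    ∃ a b, G.Adj a b ∧ (branch G a b).ncard ≤ k ∧ (branch G b a).ncard ≤ k := by
  induction hs : (branch G u v).ncard using Nat.strong_induction_on generalizing u v with
  | _ s ih =>
    subst hs
    obtain ⟨x, hux, hxv, hle⟩ := exists_adj_ncard_branch_le hT huv (hdeg u) hk hlarge
    obtain hxu | hxu := le_or_gt (branch G x u).ncard k
    · exact ⟨u, x, hux, hle, hxu⟩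
    have hbridge := isAcyclic_iff_forall_adj_isBridge.1 hT.isAcyclic hux.symm
    have hlt := Set.ncard_lt_ncard (branch_ssubset_branch hbridge hux hxv)
    exact ih _ hlt hux.symm hxu rfl

end Finite

theorem two_mul_pred_div_three_lt_ceil {n : ℕ} (hn : 0 < n) :
    2 * (n - 1) / 3 < ⌈(2 * (n : ℚ)) / 3⌉₊ := by
  rw [Nat.lt_ceil, lt_div_iff₀ three_pos]
  norm_cast
  lia

theorem tree_centroid_edge_general {V : Type*} [Finite V] [Nontrivial V] (G : SimpleGraph V)
    [G.LocallyFinite] (hT : G.IsTree) (d : ℕ) (hdeg : ∀ v, G.degree v ≤ d + 1) :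
    ∃ u v : V, G.Adj u v ∧
      {w : V | (G.deleteEdges {s(u, v)}).Reachable u w}.ncard ≤
        d * (Nat.card V - 1) / (d + 1) + 1 ∧
      {w : V | (G.deleteEdges {s(u, v)}).Reachable v w}.ncard ≤
        d * (Nat.card V - 1) / (d + 1) + 1 := by
  have hk := Nat.lt_mul_div_succ (d * (Nat.card V - 1)) d.succ_pos
  simp_rw [← branch_swap]
  obtain ⟨u⟩ := hT.connected.nonempty
  obtain ⟨v, huv⟩ := hT.connected.preconnected.exists_adj_of_nontrivial u
  obtain hu | hu := lt_or_ge (d * (Nat.card V - 1) / (d + 1) + 1) (branch G u v).ncard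
  · exact exists_adj_ncard_branch_le_and_le_of_lt hT hdeg hk huv hu
  obtain hv | hv := lt_or_ge (d * (Nat.card V - 1) / (d + 1) + 1) (branch G v u).ncard
  · exact exists_adj_ncard_branch_le_and_le_of_lt hT hdeg hk huv.symm hv
  · exact ⟨u, v, huv, hu, hv⟩

/-- Every finite tree on `n ≥ 2` vertices with maximum degree at most 3
contains a *centroid edge*: an edge `{u, v}` whose deletion splits the tree into two
connected components (the one containing `u` and the one containing `v`), each with at
most `⌈2n/3⌉` vertices. -/
theorem tree_centroid_edge {V : Type} [Fintype V] (G : SimpleGraph V) [DecidableRel G.Adj]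
    (hT : G.IsTree) (hn : 2 ≤ Fintype.card V) (hdeg : ∀ v : V, G.degree v ≤ 3) :
    ∃ u v : V, G.Adj u v ∧
      {w : V | (G.deleteEdges {s(u, v)}).Reachable u w}.ncard ≤
        ⌈(2 * (Fintype.card V : ℚ)) / 3⌉₊ ∧
      {w : V | (G.deleteEdges {s(u, v)}).Reachable v w}.ncard ≤
        ⌈(2 * (Fintype.card V : ℚ)) / 3⌉₊ := by
  have : Nontrivial V := Fintype.one_lt_card_iff_nontrivial.1 hn
  obtain ⟨u, v, huv, hu, hv⟩ := tree_centroid_edge_general G hT 2 hdeg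
  rw [Nat.card_eq_fintype_card] at hu hv
  have hceil := two_mul_pred_div_three_lt_ceil (zero_lt_two.trans_le hn)
  exact ⟨u, v, huv, hu.trans hceil, hv.trans hceil⟩
end

section
/- Let G be a finite tree on n ≥ 2 vertices with an edge-length function ℓ assigning to each edge a nonnegative real length. Then there exist a finite tree G' on at most 2n vertices in which every vertex has degree at most 3, an edge-length function ℓ' on G' assigning nonnegative real lengths, and an injective map φ from the vertices of G to the vertices of G', such that for all vertices u, v of G, dist_{ℓ'}(φ(u), φ(v)) = dist_ℓ(u,v). -/
/-- The length of a walk with respect to an edge-length function `ℓ`: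
the sum of `ℓ` over the edges of the walk (with multiplicity). -/
def SimpleGraph.Walk.lengthW {V : Type} {G : SimpleGraph V} (ℓ : Sym2 V → ℝ)
    {u v : V} (p : G.Walk u v) : ℝ :=
  (p.edges.map ℓ).sum

/-- The weighted distance `dist_ℓ(u, v)`: the infimum over all walks from `u` to `v`
of their lengths with respect to `ℓ`. -/
noncomputable def SimpleGraph.wdist {V : Type} (G : SimpleGraph V) (ℓ : Sym2 V → ℝ)
    (u v : V) : ℝ :=
  sInf {x : ℝ | ∃ p : G.Walk u v, p.lengthW ℓ = x}

/-!
Peel off a leaf `v` with neighbour `u` and suppose the rest of the tree has been modelled so that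
all vertices have degree at most 3 and those representing original vertices have degree at most 2.
Attach a new vertex to the representative of `u` by an edge of length zero, let the new vertex
represent `u` from now on, and attach `v` to it. Every vertex removed from the tree thus costs
two vertices of the model, and the degree bounds survive.

Distances are controlled by a universal property: `wdist` is the largest pseudometric that is
bounded by the length of each edge.
-/

namespace WeightedTree

open SimpleGraph Function

section WDist

variable {V W : Type} {G : SimpleGraph V} {H : SimpleGraph W} {ℓ : Sym2 V → ℝ} {m : Sym2 W → ℝ}

lemma lengthW_cons {u v w : V} (h : G.Adj u v) (p : G.Walk v w) :
    (Walk.cons h p).lengthW ℓ = ℓ s(u, v) + p.lengthW ℓ := by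
  simp [Walk.lengthW]

lemma lengthW_append {u v w : V} (p : G.Walk u v) (q : G.Walk v w) :
    (p.append q).lengthW ℓ = p.lengthW ℓ + q.lengthW ℓ := by
  simp [Walk.lengthW]

lemma lengthW_reverse {u v : V} (p : G.Walk u v) : p.reverse.lengthW ℓ = p.lengthW ℓ := by
  simp [Walk.lengthW, List.sum_reverse]

lemma lengthW_nonneg (hℓ : ∀ e ∈ G.edgeSet, 0 ≤ ℓ e) {u v : V} (p : G.Walk u v) :
    0 ≤ p.lengthW ℓ :=
  List.sum_nonneg <| List.forall_mem_map.2 fun e he => hℓ e (p.edges_subset_edgeSet he)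

lemma wdist_le_lengthW (hℓ : ∀ e ∈ G.edgeSet, 0 ≤ ℓ e) {u v : V} (p : G.Walk u v) :
    G.wdist ℓ u v ≤ p.lengthW ℓ :=
  csInf_le ⟨0, by rintro _ ⟨q, rfl⟩; exact lengthW_nonneg hℓ q⟩ ⟨p, rfl⟩

lemma le_wdist {u v : V} (huv : G.Reachable u v) {c : ℝ}
    (hc : ∀ p : G.Walk u v, c ≤ p.lengthW ℓ) : c ≤ G.wdist ℓ u v := by
  obtain ⟨p⟩ := huv
  exact le_csInf ⟨_, p, rfl⟩ (by rintro _ ⟨q, rfl⟩; exact hc q)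

lemma wdist_self (hℓ : ∀ e ∈ G.edgeSet, 0 ≤ ℓ e) (u : V) : G.wdist ℓ u u = 0 :=
  le_antisymm (wdist_le_lengthW hℓ Walk.nil) (le_wdist .rfl fun p => lengthW_nonneg hℓ p)

lemma wdist_comm (u v : V) : G.wdist ℓ u v = G.wdist ℓ v u := by
  unfold SimpleGraph.wdist
  congr 1 with x
  constructor <;> rintro ⟨p, rfl⟩ <;> exact ⟨p.reverse, lengthW_reverse p⟩

lemma wdist_triangle (hG : G.Connected) (hℓ : ∀ e ∈ G.edgeSet, 0 ≤ ℓ e) (u v w : V) :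
    G.wdist ℓ u w ≤ G.wdist ℓ u v + G.wdist ℓ v w := by
  rw [← sub_le_iff_le_add]
  refine le_wdist (hG u v) fun p => ?_
  rw [sub_le_comm]
  refine le_wdist (hG v w) fun q => ?_
  rw [sub_le_iff_le_add', ← lengthW_append]
  exact wdist_le_lengthW hℓ (p.append q)

lemma wdist_le_of_adj (hℓ : ∀ e ∈ G.edgeSet, 0 ≤ ℓ e) {u v : V} (h : G.Adj u v) :
    G.wdist ℓ u v ≤ ℓ s(u, v) := by
  simpa [Walk.lengthW] using wdist_le_lengthW hℓ h.toWalk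

lemma le_wdist_of_triangle (hG : G.Connected) {d : V → V → ℝ} (d_self : ∀ x, d x x ≤ 0)
    (d_triangle : ∀ x y z, d x z ≤ d x y + d y z) (d_adj : ∀ x y, G.Adj x y → d x y ≤ ℓ s(x, y))
    (u v : V) : d u v ≤ G.wdist ℓ u v := by
  refine le_wdist (hG u v) fun p => ?_
  induction p with
  | nil => exact d_self _
  | cons h p ih =>
    rw [lengthW_cons]
    exact (d_triangle _ _ _).trans (add_le_add (d_adj _ _ h) ih)

lemma comp_map_nonneg (f : G →g H) (hm : ∀ e ∈ H.edgeSet, 0 ≤ m e) :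
    ∀ e ∈ G.edgeSet, 0 ≤ (m ∘ Sym2.map f) e :=
  fun _ he => hm _ (f.map_mem_edgeSet he)

lemma wdist_hom_le (hG : G.Connected) (hH : H.Connected) (hm : ∀ e ∈ H.edgeSet, 0 ≤ m e)
    (f : G →g H) (u v : V) : H.wdist m (f u) (f v) ≤ G.wdist (m ∘ Sym2.map f) u v :=
  le_wdist_of_triangle hG (d := fun x y => H.wdist m (f x) (f y)) (fun _ => (wdist_self hm _).le)
    (fun _ _ _ => wdist_triangle hH hm _ _ _) (fun _ _ h => wdist_le_of_adj hm (f.map_adj h)) u v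

lemma wdist_iso (hG : G.Connected) (hm : ∀ e ∈ H.edgeSet, 0 ≤ m e) (f : G ≃g H) (u v : V) :
    H.wdist m (f u) (f v) = G.wdist (m ∘ Sym2.map f) u v := by
  have hH : H.Connected := f.connected_iff.1 hG
  refine le_antisymm (wdist_hom_le hG hH hm f.toHom u v) ?_
  have symm_le := wdist_hom_le hH hG (comp_map_nonneg f.toHom hm) f.symm.toHom (f u) (f v)
  have map_comp_map_symm : (m ∘ Sym2.map f) ∘ Sym2.map f.symm = m := by
    ext e
    simp [Sym2.map_map, comp_def]
  simpa [map_comp_map_symm] using symm_le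

end WDist

section AttachLeaf

variable {W : Type*} {H : SimpleGraph W} {u : W}

/-- The graph obtained from `H` by attaching a new leaf to the vertex `u`. The new leaf is `none`
and the old vertices are `some a`. -/
def attachLeaf (H : SimpleGraph W) (u : W) : SimpleGraph (Option W) :=
  H.map Embedding.some ⊔ edge none (some u)

@[simp]
lemma attachLeaf_adj_some_some {a b : W} :
    (attachLeaf H u).Adj (some a) (some b) ↔ H.Adj a b := by
  simpa [attachLeaf, map_adj', edge_adj] using Adj.ne

@[simp]
lemma attachLeaf_adj_none_some {b : W} : (attachLeaf H u).Adj none (some b) ↔ b = u := by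
  simp [attachLeaf, map_adj', edge_adj]

@[simp]
lemma attachLeaf_adj_some_none {a : W} : (attachLeaf H u).Adj (some a) none ↔ a = u := by
  rw [adj_comm, attachLeaf_adj_none_some]

/-- The inclusion of `H` into `attachLeaf H u`. -/
def someHom (H : SimpleGraph W) (u : W) : H →g attachLeaf H u where
  toFun := some
  map_rel' := attachLeaf_adj_some_some.2

lemma attachLeaf_connected (hH : H.Connected) : (attachLeaf H u).Connected := by
  have reachable_some : ∀ x, (attachLeaf H u).Reachable x (some u)
    | none => (attachLeaf_adj_none_some.2 rfl).reachable
    | some a => (hH a u).map (someHom H u)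
  exact ⟨fun x y => (reachable_some x).trans (reachable_some y).symm⟩

lemma edgeSet_attachLeaf :
    (attachLeaf H u).edgeSet = insert s(none, some u) (Sym2.map some '' H.edgeSet) := by
  rw [attachLeaf, edgeSet_sup, edgeSet_map, edgeSet_edge_of_ne (Option.some_ne_none u).symm,
    Set.union_singleton]
  rfl

lemma attachLeaf_isTree [Finite W] (hH : H.IsTree) : (attachLeaf H u).IsTree := by
  rw [isTree_iff_connected_and_card] at hH ⊢
  refine ⟨attachLeaf_connected hH.1, ?_⟩
  have new_edge_notMem : s(none, some u) ∉ Sym2.map some '' H.edgeSet := by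
    rintro ⟨e, -, he⟩
    have none_mem : none ∈ Sym2.map some e := he ▸ Sym2.mem_mk_left _ _
    simp at none_mem
  rw [Nat.card_coe_set_eq, edgeSet_attachLeaf, Set.ncard_insert_of_notMem new_edge_notMem,
    Set.ncard_image_of_injective _ (Sym2.map.injective (Option.some_injective W)),
    ← Nat.card_coe_set_eq, hH.2, Finite.card_option]

lemma ncard_neighborSet_attachLeaf_none : ((attachLeaf H u).neighborSet none).ncard = 1 := by
  rw [Set.ncard_eq_one]
  exact ⟨some u, by ext (_ | b) <;> simp⟩

lemma ncard_neighborSet_attachLeaf_some_of_ne {a : W} (ha : a ≠ u) :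
    ((attachLeaf H u).neighborSet (some a)).ncard = (H.neighborSet a).ncard := by
  have neighborSet_eq : (attachLeaf H u).neighborSet (some a) = some '' H.neighborSet a := by
    ext (_ | b) <;> simp [ha]
  rw [neighborSet_eq, Set.ncard_image_of_injective _ (Option.some_injective W)]

lemma ncard_neighborSet_attachLeaf_some_self_le :
    ((attachLeaf H u).neighborSet (some u)).ncard ≤ (H.neighborSet u).ncard + 1 := by
  have neighborSet_eq :
      (attachLeaf H u).neighborSet (some u) = insert none (some '' H.neighborSet u) := by
    ext (_ | b) <;> simp
  rw [neighborSet_eq, ← Set.ncard_image_of_injective _ (Option.some_injective W)]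
  exact Set.ncard_insert_le _ _

lemma ncard_neighborSet_attachLeaf_some_le {k : ℕ} {a : W} (ha : (H.neighborSet a).ncard ≤ k)
    (hu : (H.neighborSet u).ncard + 1 ≤ k) :
    ((attachLeaf H u).neighborSet (some a)).ncard ≤ k := by
  obtain rfl | hau := eq_or_ne a u
  · exact ncard_neighborSet_attachLeaf_some_self_le.trans hu
  · rwa [ncard_neighborSet_attachLeaf_some_of_ne hau]

end AttachLeaf

section TreeInduction

universe u

lemma exists_iso_attachLeaf {V : Type u} [Finite V] [Nontrivial V] {G : SimpleGraph V}
    (hG : G.IsTree) :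
    ∃ (v : V) (H : SimpleGraph {x // x ≠ v}) (u : {x // x ≠ v}),
      H.IsTree ∧ Nonempty (attachLeaf H u ≃g G) := by
  classical
  have := Fintype.ofFinite V
  obtain ⟨v, hv⟩ := hG.exists_vert_degree_one_of_nontrivial
  obtain ⟨u, hvu, u_unique⟩ := degree_eq_one_iff_existsUnique_adj.1 hv
  have adj_iff (b : {x // x ≠ v}) : G.Adj v b ↔ b = ⟨u, hvu.ne'⟩ :=
    ⟨fun h => Subtype.ext (u_unique _ h), fun h => h ▸ hvu⟩
  refine ⟨v, G.induce {x | x ≠ v}, ⟨u, hvu.ne'⟩,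
    ⟨hG.connected.induce_compl_singleton_of_degree_eq_one hv, hG.isAcyclic.induce _⟩,
    ⟨⟨Equiv.optionSubtypeNe v, ?_⟩⟩⟩
  rintro (_ | a) (_ | b)
  · simp
  · simpa using adj_iff b
  · simpa [G.adj_comm] using adj_iff a
  · simp

theorem finite_tree_induction {motive : ∀ {V : Type u}, SimpleGraph V → Prop}
    (subsingleton : ∀ {V : Type u} [Subsingleton V] {G : SimpleGraph V}, G.IsTree → motive G)
    (iso : ∀ {V W : Type u} [Finite V] [Finite W] {G : SimpleGraph V} {H : SimpleGraph W},
      G.IsTree → (G ≃g H) → motive G → motive H)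
    (attachLeaf : ∀ {W : Type u} [Finite W] {H : SimpleGraph W} (u : W),
      H.IsTree → motive H → motive (attachLeaf H u))
    {V : Type u} [Finite V] {G : SimpleGraph V} (hG : G.IsTree) : motive G := by
  induction h : Nat.card V generalizing V with
  | zero =>
    have := hG.connected.nonempty
    exact absurd h Nat.card_pos.ne'
  | succ n ih =>
    obtain hV | hV := subsingleton_or_nontrivial V
    · exact subsingleton hG
    · obtain ⟨v, H, u, hH, ⟨f⟩⟩ := exists_iso_attachLeaf hG
      classical
      have card_remaining : Nat.card {x // x ≠ v} = n := by
        rw [← Nat.card_congr (Equiv.optionSubtypeNe v), Finite.card_option] at h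
        omega
      exact iso (attachLeaf_isTree hH) f (attachLeaf u hH (ih hH card_remaining))

end TreeInduction

section AttachLength

variable {W : Type*} {H : SimpleGraph W} {ℓ : Sym2 W → ℝ} {u : W} {c : ℝ}

/-- The edge-length function on `attachLeaf H u` that extends `ℓ` and gives length `c` to the
new edge. It takes the value `c` on every pair containing `none`. -/
def attachLength (ℓ : Sym2 W → ℝ) (c : ℝ) : Sym2 (Option W) → ℝ :=
  Sym2.lift ⟨fun
    | some a, some b => ℓ s(a, b)
    | _, _ => c,
    by rintro (_ | a) (_ | b) <;> simp [Sym2.eq_swap]⟩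

lemma attachLength_comp_map_some : attachLength ℓ c ∘ Sym2.map some = ℓ := by
  ext ⟨a, b⟩
  rfl

lemma attachLength_none {x : Option W} : attachLength ℓ c s(none, x) = c := rfl

lemma attachLength_nonneg (hℓ : ∀ e ∈ H.edgeSet, 0 ≤ ℓ e) (hc : 0 ≤ c) :
    ∀ e ∈ (attachLeaf H u).edgeSet, 0 ≤ attachLength ℓ c e := by
  rw [edgeSet_attachLeaf, Set.forall_mem_insert, Set.forall_mem_image]
  exact ⟨hc, fun e he => (hℓ e he).trans_eq (congrFun attachLength_comp_map_some e).symm⟩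

end AttachLength

section AttachDist

variable {W W' : Type*} {u : W} {c : ℝ}

/-- The extension of a distance `d` on `W` to `Option W` that puts `none` at distance `c` behind
`u`. The absolute value makes `none` have distance zero from itself. -/
def attachDist (d : W → W → ℝ) (u : W) (c : ℝ) (x y : Option W) : ℝ :=
  |x.elim c (fun _ => 0) - y.elim c (fun _ => 0)| + d (x.getD u) (y.getD u)

variable {d : W → W → ℝ}

lemma attachDist_self (x : Option W) : attachDist d u c x x = d (x.getD u) (x.getD u) := by
  simp [attachDist]

lemma attachDist_none_some (hc : 0 ≤ c) (b : W) :
    attachDist d u c none (some b) = c + d u b := by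
  simp [attachDist, abs_of_nonneg hc]

lemma attachDist_some_none (hc : 0 ≤ c) (a : W) :
    attachDist d u c (some a) none = c + d a u := by
  simp [attachDist, abs_of_nonneg hc]

lemma attachDist_some_some (a b : W) : attachDist d u c (some a) (some b) = d a b := by
  simp [attachDist]

lemma attachDist_zero (x y : Option W) : attachDist d u 0 x y = d (x.getD u) (y.getD u) := by
  cases x <;> cases y <;> simp [attachDist]

lemma attachDist_map {d' : W' → W' → ℝ} (φ : W → W') (x y : Option W) :
    attachDist d' (φ u) c (x.map φ) (y.map φ) =
      attachDist (fun a b => d' (φ a) (φ b)) u c x y := by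
  cases x <;> cases y <;> rfl

lemma attachDist_triangle (d_triangle : ∀ a b b', d a b' ≤ d a b + d b b') (x y z : Option W) :
    attachDist d u c x z ≤ attachDist d u c x y + attachDist d u c y z := by
  unfold attachDist
  linarith [d_triangle (x.getD u) (y.getD u) (z.getD u),
    abs_sub_le (x.elim c fun _ => 0) (y.elim c fun _ => 0) (z.elim c fun _ => 0)]

end AttachDist

section WDistAttachLeaf

variable {W : Type} {H : SimpleGraph W} {u : W} {m : Sym2 (Option W) → ℝ}

lemma attachDist_le_wdist_attachLeaf (hH : H.Connected)
    (hm : ∀ e ∈ (attachLeaf H u).edgeSet, 0 ≤ m e) (x y : Option W) :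
    attachDist (H.wdist (m ∘ Sym2.map some)) u (m s(none, some u)) x y ≤
      (attachLeaf H u).wdist m x y := by
  have old_nonneg : ∀ e ∈ H.edgeSet, 0 ≤ (m ∘ Sym2.map some) e :=
    comp_map_nonneg (someHom H u) hm
  have new_nonneg : 0 ≤ m s(none, some u) := hm _ (attachLeaf_adj_none_some.2 rfl)
  refine le_wdist_of_triangle (attachLeaf_connected hH) (fun x => ?_)
    (attachDist_triangle (wdist_triangle hH old_nonneg)) ?_ x y
  · rw [attachDist_self, wdist_self old_nonneg]
  · rintro (_ | a) (_ | b) hab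
    · exact absurd hab (SimpleGraph.irrefl _)
    · obtain rfl := attachLeaf_adj_none_some.1 hab
      rw [attachDist_none_some new_nonneg, wdist_self old_nonneg, add_zero]
    · obtain rfl := attachLeaf_adj_some_none.1 hab
      rw [attachDist_some_none new_nonneg, wdist_self old_nonneg, add_zero, Sym2.eq_swap]
    · rw [attachDist_some_some]
      exact wdist_le_of_adj old_nonneg (attachLeaf_adj_some_some.1 hab)

lemma wdist_attachLeaf_none_some_le (hH : H.Connected)
    (hm : ∀ e ∈ (attachLeaf H u).edgeSet, 0 ≤ m e) (b : W) :
    (attachLeaf H u).wdist m none (some b) ≤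
      m s(none, some u) + H.wdist (m ∘ Sym2.map some) u b :=
  (wdist_triangle (attachLeaf_connected hH) hm none (some u) (some b)).trans <|
    add_le_add (wdist_le_of_adj hm (attachLeaf_adj_none_some.2 rfl))
      (wdist_hom_le hH (attachLeaf_connected hH) hm (someHom H u) u b)

lemma wdist_attachLeaf (hH : H.Connected) (hm : ∀ e ∈ (attachLeaf H u).edgeSet, 0 ≤ m e)
    (x y : Option W) :
    (attachLeaf H u).wdist m x y =
      attachDist (H.wdist (m ∘ Sym2.map some)) u (m s(none, some u)) x y := by
  refine le_antisymm ?_ (attachDist_le_wdist_attachLeaf hH hm x y)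
  have new_nonneg : 0 ≤ m s(none, some u) := hm _ (attachLeaf_adj_none_some.2 rfl)
  obtain _ | a := x <;> obtain _ | b := y
  · rw [attachDist_self, wdist_self hm]
    exact (wdist_self (comp_map_nonneg (someHom H u) hm) u).ge
  · rw [attachDist_none_some new_nonneg]
    exact wdist_attachLeaf_none_some_le hH hm b
  · rw [attachDist_some_none new_nonneg, wdist_comm, wdist_comm a]
    exact wdist_attachLeaf_none_some_le hH hm a
  · rw [attachDist_some_some]
    exact wdist_hom_le hH (attachLeaf_connected hH) hm (someHom H u) a b

end WDistAttachLeaf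

section SubcubicModel

lemma getD_update_some_comp {α β : Type*} [DecidableEq α] (φ : α → β) (u x : α) :
    (update (some ∘ φ) u none x).getD (φ u) = φ x := by
  obtain rfl | hx := eq_or_ne x u
  · rw [update_self, Option.getD_none]
  · rw [update_of_ne hx, comp_apply, Option.getD_some]

variable {V V' : Type} {G : SimpleGraph V} {ℓ : Sym2 V → ℝ} {G' : SimpleGraph V'}
  {ℓ' : Sym2 V' → ℝ} {φ : V → V'}

/-- The weighted tree `(G', ℓ')` of maximum degree at most 3 contains a copy of the vertices of
`(G, ℓ)` with the same distances. The vertices of the copy have degree at most 2, which leaves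
room for one more edge at each of them. -/
structure IsSubcubicModel (G : SimpleGraph V) (ℓ : Sym2 V → ℝ) (G' : SimpleGraph V')
    (ℓ' : Sym2 V' → ℝ) (φ : V → V') : Prop where
  isTree : G'.IsTree
  ncard_neighborSet_le : ∀ w, (G'.neighborSet w).ncard ≤ 3
  ncard_neighborSet_apply_le : ∀ x, (G'.neighborSet (φ x)).ncard ≤ 2
  nonneg : ∀ e ∈ G'.edgeSet, 0 ≤ ℓ' e
  injective : Injective φ
  wdist_apply : ∀ x y, G'.wdist ℓ' (φ x) (φ y) = G.wdist ℓ x y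

namespace IsSubcubicModel

lemma refl_of_subsingleton [Subsingleton V] (hG : G.IsTree) : IsSubcubicModel G ℓ G ℓ id := by
  have ncard_le_one (w : V) : (G.neighborSet w).ncard ≤ 1 := Set.ncard_le_one_of_subsingleton _
  exact ⟨hG, fun w => (ncard_le_one w).trans (by simp), fun w => (ncard_le_one w).trans (by simp),
    by simp [Subsingleton.elim G ⊥], injective_id, fun _ _ => rfl⟩

lemma comp_iso_symm {W : Type} {H : SimpleGraph W} {m : Sym2 W → ℝ} (hG : G.Connected)
    (hm : ∀ e ∈ H.edgeSet, 0 ≤ m e) (f : G ≃g H)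
    (hφ : IsSubcubicModel G (m ∘ Sym2.map f) G' ℓ' φ) :
    IsSubcubicModel H m G' ℓ' (φ ∘ f.symm) where
  isTree := hφ.isTree
  ncard_neighborSet_le := hφ.ncard_neighborSet_le
  ncard_neighborSet_apply_le x := hφ.ncard_neighborSet_apply_le (f.symm x)
  nonneg := hφ.nonneg
  injective := hφ.injective.comp f.symm.injective
  wdist_apply x y := by
    rw [comp_apply, comp_apply, hφ.wdist_apply, ← wdist_iso hG hm f, f.apply_symm_apply,
      f.apply_symm_apply]

lemma moveToLeaf [DecidableEq V] [Finite V'] (hφ : IsSubcubicModel G ℓ G' ℓ' φ) (u : V) :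
    IsSubcubicModel G ℓ (attachLeaf G' (φ u)) (attachLength ℓ' 0)
      (update (some ∘ φ) u none) where
  isTree := attachLeaf_isTree hφ.isTree
  ncard_neighborSet_le
    | none => by simp [ncard_neighborSet_attachLeaf_none]
    | some w => ncard_neighborSet_attachLeaf_some_le (hφ.ncard_neighborSet_le w)
        (Nat.succ_le_succ (hφ.ncard_neighborSet_apply_le u))
  ncard_neighborSet_apply_le x := by
    obtain rfl | hx := eq_or_ne x u
    · simp [ncard_neighborSet_attachLeaf_none]
    · rw [update_of_ne hx, comp_apply,
        ncard_neighborSet_attachLeaf_some_of_ne (hφ.injective.ne hx)]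
      exact hφ.ncard_neighborSet_apply_le x
  nonneg := attachLength_nonneg hφ.nonneg le_rfl
  injective x y hxy := hφ.injective <| by
    rw [← getD_update_some_comp φ u x, hxy, getD_update_some_comp]
  wdist_apply x y := by
    rw [wdist_attachLeaf hφ.isTree.connected (attachLength_nonneg hφ.nonneg le_rfl),
      attachLength_comp_map_some, attachLength_none, attachDist_zero, getD_update_some_comp,
      getD_update_some_comp, hφ.wdist_apply]

lemma attachLeaf_of_ncard_le_one [Finite V'] {m : Sym2 (Option V) → ℝ} {u : V}
    (hG : G.Connected) (hm : ∀ e ∈ (attachLeaf G u).edgeSet, 0 ≤ m e)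
    (hφ : IsSubcubicModel G (m ∘ Sym2.map some) G' ℓ' φ)
    (hu : (G'.neighborSet (φ u)).ncard ≤ 1) :
    IsSubcubicModel (attachLeaf G u) m (attachLeaf G' (φ u))
      (attachLength ℓ' (m s(none, some u))) (Option.map φ) := by
  have ℓ'_nonneg := attachLength_nonneg (u := φ u) hφ.nonneg
    (hm s(none, some u) (attachLeaf_adj_none_some.2 rfl))
  refine ⟨attachLeaf_isTree hφ.isTree, ?_, ?_, ℓ'_nonneg, Option.map_injective hφ.injective, ?_⟩
  · rintro (_ | w)
    · simp [ncard_neighborSet_attachLeaf_none]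
    · exact ncard_neighborSet_attachLeaf_some_le (hφ.ncard_neighborSet_le w) (by omega)
  · rintro (_ | x)
    · simp [ncard_neighborSet_attachLeaf_none]
    · exact ncard_neighborSet_attachLeaf_some_le (hφ.ncard_neighborSet_apply_le x) (by omega)
  · intro x y
    rw [wdist_attachLeaf hφ.isTree.connected ℓ'_nonneg, wdist_attachLeaf hG hm,
      attachLength_comp_map_some, attachLength_none, attachDist_map]
    simp only [hφ.wdist_apply]

end IsSubcubicModel

/-- Whatever its nonnegative edge lengths, `G` has a subcubic model on fewer than twice as many
vertices. -/
def HasSmallSubcubicModels (G : SimpleGraph V) : Prop :=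
  ∀ ℓ : Sym2 V → ℝ, (∀ e ∈ G.edgeSet, 0 ≤ ℓ e) →
    ∃ (V' : Type) (_ : Finite V') (G' : SimpleGraph V') (ℓ' : Sym2 V' → ℝ) (φ : V → V'),
      IsSubcubicModel G ℓ G' ℓ' φ ∧ Nat.card V' < 2 * Nat.card V

namespace HasSmallSubcubicModels

lemma of_subsingleton [Subsingleton V] (hG : G.IsTree) : HasSmallSubcubicModels G := by
  intro ℓ _
  have := hG.connected.nonempty
  have card_pos : 0 < Nat.card V := Nat.card_pos
  exact ⟨V, inferInstance, G, ℓ, id, .refl_of_subsingleton hG, by omega⟩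

lemma iso {W : Type} {H : SimpleGraph W} (hG : G.IsTree) (f : G ≃g H)
    (h : HasSmallSubcubicModels G) : HasSmallSubcubicModels H := by
  intro m hm
  obtain ⟨V', _, G', ℓ', φ, hφ, card_lt⟩ := h _ (comp_map_nonneg f.toHom hm)
  exact ⟨V', ‹_›, G', ℓ', φ ∘ f.symm, hφ.comp_iso_symm hG.connected hm f,
    Nat.card_congr f.toEquiv ▸ card_lt⟩

lemma attachLeaf [Finite V] (u : V) (hG : G.IsTree) (h : HasSmallSubcubicModels G) :
    HasSmallSubcubicModels (attachLeaf G u) := by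
  classical
  intro m hm
  obtain ⟨V', _, G', ℓ', φ, hφ, card_lt⟩ := h _ (comp_map_nonneg (someHom G u) hm)
  refine ⟨_, inferInstance, _, _, _,
    (hφ.moveToLeaf u).attachLeaf_of_ncard_le_one hG.connected hm ?_, ?_⟩
  · rw [update_self, ncard_neighborSet_attachLeaf_none]
  · simp only [Finite.card_option]
    omega

end HasSmallSubcubicModels

theorem hasSmallSubcubicModels_of_isTree [Finite V] (hG : G.IsTree) :
    HasSmallSubcubicModels G :=
  finite_tree_induction (motive := HasSmallSubcubicModels) .of_subsingleton .iso .attachLeaf hG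

end SubcubicModel

end WeightedTree

/-- Every finite tree `G` on `n ≥ 2` vertices with nonnegative edge
lengths can be replaced by a finite tree `G'` on at most `2n` vertices, with maximum
degree at most 3 and nonnegative edge lengths `ℓ'`, together with an injective map `φ`
from the vertices of `G` to those of `G'` preserving all weighted distances. -/
theorem exists_degree_three_tree_isometry {V : Type} [Fintype V] (G : SimpleGraph V)
    (hT : G.IsTree) (hn : 2 ≤ Fintype.card V)
    (ℓ : Sym2 V → ℝ) (hℓ : ∀ e ∈ G.edgeSet, 0 ≤ ℓ e) :
    ∃ (V' : Type) (_ : Fintype V') (G' : SimpleGraph V') (ℓ' : Sym2 V' → ℝ)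
      (φ : V → V'),
      G'.IsTree ∧
      Fintype.card V' ≤ 2 * Fintype.card V ∧
      (∀ w : V', (G'.neighborSet w).ncard ≤ 3) ∧
      (∀ e ∈ G'.edgeSet, 0 ≤ ℓ' e) ∧
      Function.Injective φ ∧
      ∀ x y : V, G'.wdist ℓ' (φ x) (φ y) = G.wdist ℓ x y := by
  obtain ⟨V', _, G', ℓ', φ, hφ, card_lt⟩ :=
    WeightedTree.hasSmallSubcubicModels_of_isTree hT ℓ hℓ
  have := Fintype.ofFinite V'
  simp only [Nat.card_eq_fintype_card] at card_lt
  exact ⟨V', ‹_›, G', ℓ', φ, hφ.isTree, card_lt.le, hφ.ncard_neighborSet_le, hφ.nonneg,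
    hφ.injective, hφ.wdist_apply⟩
end

section
/- Let G be a finite simple graph, let T be a finite tree, and let B assign to each node t of T a finite set B(t) of vertices of G such that: (i) every vertex of G lies in B(t) for some node t; (ii) for every edge {u,v} of G there is a node t with both u ∈ B(t) and v ∈ B(t); and (iii) for every vertex x of G, the set of nodes t with x ∈ B(t) induces a connected subgraph of T. Let {a,b} be an edge of T, let T_a and T_b be the components of T after deleting {a,b} containing a and b respectively, and let V_a = ⋃_{t ∈ T_a} B(t) and V_b = ⋃_{t ∈ T_b} B(t). Then every walk in G from a vertex of V_a to a vertex of V_b visits a vertex of B(a) ∩ B(b). -/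
/-!
Let `F` be a set of edges of `T`. If a vertex `x` of `G` lies in no adhesion set of an edge in `F`,
then the connected set of nodes whose bags contain `x` uses no edge of `F`, so it survives the
deletion of `F` from `T`. Since consecutive vertices of a walk share a bag, a walk that avoids
these adhesion sets links any bag at its start to any bag at its end without crossing `F`. When
`F` is a single bridge, such a walk cannot change sides.
-/

section

variable {V N : Type*} {G : SimpleGraph V} {T : SimpleGraph N}

theorem reachable_deleteEdges_of_preconnected_induce {S : Set N} {F : Set (Sym2 N)}
    (hS : (T.induce S).Preconnected) (hF : ∀ c ∈ S, ∀ d ∈ S, s(c, d) ∉ F)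
    {t t' : N} (ht : t ∈ S) (ht' : t' ∈ S) : (T.deleteEdges F).Reachable t t' := by
  let inclusion : T.induce S →g T.deleteEdges F :=
    { toFun := Subtype.val
      map_rel' := fun {c d} hcd ↦
        SimpleGraph.deleteEdges_adj.mpr ⟨hcd, hF c c.property d d.property⟩ }
  exact (hS ⟨t, ht⟩ ⟨t', ht'⟩).map inclusion

theorem reachable_deleteEdges_of_walk_avoids_adhesion {B : N → Set V} {F : Set (Sym2 N)}
    (hedge : ∀ x y : V, G.Adj x y → ∃ t : N, x ∈ B t ∧ y ∈ B t)
    (hconn : ∀ x : V, (T.induce {t : N | x ∈ B t}).Preconnected)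
    {u v : V} (W : G.Walk u v)
    (havoid : ∀ x ∈ W.support, ∀ c, x ∈ B c → ∀ d, x ∈ B d → s(c, d) ∉ F)
    {t t' : N} (hut : u ∈ B t) (hvt' : v ∈ B t') : (T.deleteEdges F).Reachable t t' := by
  induction W generalizing t with
  | nil =>
    exact reachable_deleteEdges_of_preconnected_induce (hconn _) (havoid _ (by simp)) hut hvt'
  | cons huw W ih =>
    obtain ⟨s, hus, hws⟩ := hedge _ _ huw
    have hts : (T.deleteEdges F).Reachable t s :=
      reachable_deleteEdges_of_preconnected_induce (hconn _) (havoid _ (by simp)) hut hus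
    have hst' : (T.deleteEdges F).Reachable s t' :=
      ih (fun x hx ↦ havoid x (by simp [hx])) hws hvt'
    exact hts.trans hst'

theorem tree_decomposition_adhesion_separates_general {B : N → Set V}
    (hedge : ∀ x y : V, G.Adj x y → ∃ t : N, x ∈ B t ∧ y ∈ B t)
    (hconn : ∀ x : V, (T.induce {t : N | x ∈ B t}).Preconnected)
    {a b : N} (hab : T.IsBridge s(a, b)) {u v : V}
    (hu : ∃ t : N, (T.deleteEdges {s(a, b)}).Reachable a t ∧ u ∈ B t)
    (hv : ∃ t : N, (T.deleteEdges {s(a, b)}).Reachable b t ∧ v ∈ B t)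
    (W : G.Walk u v) :
    ∃ s ∈ B a ∩ B b, s ∈ W.support := by
  obtain ⟨t, hat, hut⟩ := hu
  obtain ⟨t', hbt', hvt'⟩ := hv
  by_contra! hW
  have havoid : ∀ x ∈ W.support, ∀ c, x ∈ B c → ∀ d, x ∈ B d →
      s(c, d) ∉ ({s(a, b)} : Set (Sym2 N)) := by
    intro x hx c hc d hd hcd
    rcases Sym2.eq_iff.mp hcd with ⟨rfl, rfl⟩ | ⟨rfl, rfl⟩
    · exact hW x ⟨hc, hd⟩ hx
    · exact hW x ⟨hd, hc⟩ hx
  have htt' : (T.deleteEdges {s(a, b)}).Reachable t t' :=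
    reachable_deleteEdges_of_walk_avoids_adhesion hedge hconn W havoid hut hvt'
  exact SimpleGraph.isBridge_iff.mp hab ((hat.trans htt').trans hbt'.symm)

end

/-- Let `(T, B)` be a tree decomposition of a finite simple graph `G`:
every vertex lies in some bag, every edge has both endpoints in a common bag, and for
each vertex the set of nodes whose bag contains it induces a connected subgraph of `T`.
Let `{a, b}` be an edge of `T`, let `V_a` (resp. `V_b`) be the union of the bags of the
nodes in the component of `a` (resp. `b`) after deleting `{a, b}` from `T`.  Then every
walk in `G` from a vertex of `V_a` to a vertex of `V_b` visits a vertex of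
`B(a) ∩ B(b)`. -/
theorem tree_decomposition_adhesion_separates {V N : Type} [Fintype V] [Fintype N]
    (G : SimpleGraph V) (T : SimpleGraph N) (hT : T.IsTree) (B : N → Set V)
    (h1 : ∀ x : V, ∃ t : N, x ∈ B t)
    (h2 : ∀ x y : V, G.Adj x y → ∃ t : N, x ∈ B t ∧ y ∈ B t)
    (h3 : ∀ x : V, (T.induce {t : N | x ∈ B t}).Connected)
    (a b : N) (hab : T.Adj a b)
    (u v : V)
    (hu : ∃ t : N, (T.deleteEdges {s(a, b)}).Reachable a t ∧ u ∈ B t)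
    (hv : ∃ t : N, (T.deleteEdges {s(a, b)}).Reachable b t ∧ v ∈ B t)
    (W : G.Walk u v) :
    ∃ s ∈ B a ∩ B b, s ∈ W.support := by
  exact tree_decomposition_adhesion_separates_general h2 (fun x ↦ (h3 x).preconnected)
    (SimpleGraph.isAcyclic_iff_forall_adj_isBridge.mp hT.isAcyclic hab) hu hv W
end

section
/- Let α be a linearly ordered type, let k be a natural number, let s_1, …, s_q be pairwise disjoint finite subsets of α with union s, and for each i let T_i ⊆ s_i be a subset with |T_i| = min(k, |s_i|) such that every element of s_i \ T_i is less than or equal to every element of T_i. Let T = T_1 ∪ … ∪ T_q. Then there exists a subset K ⊆ T with |K| = min(k, |s|) such that every element of s \ K is less than or equal to every element of K. -/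
/-!
Any set `K` of `k` largest elements of `T` is one of `s`. Indeed, if `x ∈ sᵢ` is not in `Tᵢ`, then
`Tᵢ` consists of `k` elements that are at least `x`. Either one of them is outside `K`, and then it
separates `x` from `K`, or all are in `K`, and then `K = Tᵢ` because `K` has at most `k` elements.
-/

/-- `K` is a set of `k` largest elements of the finite set `s`; it is all of `s` if `s` has fewer
than `k` elements. In a preorder ties are allowed, so `K` need not be unique. -/
structure IsTopK {α : Type*} [LE α] (k : ℕ) (s K : Finset α) : Prop where
  subset : K ⊆ s
  card_eq : K.card = min k s.card
  le_of_notMem : ∀ x ∈ s, x ∉ K → ∀ y ∈ K, x ≤ y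

namespace IsTopK

section LE

variable {α : Type*} [LE α] {k : ℕ} {s K : Finset α}

theorem refl_of_card_le (h : s.card ≤ k) : IsTopK k s s where
  subset := Finset.Subset.refl s
  card_eq := (min_eq_right h).symm
  le_of_notMem _ hx hxs := absurd hx hxs

theorem card_le (hK : IsTopK k s K) : K.card ≤ k :=
  hK.card_eq.trans_le (min_le_left _ _)

theorem card_eq_of_notMem (hK : IsTopK k s K) {x : α} (hx : x ∈ s) (hxK : x ∉ K) :
    K.card = k := by
  have card_lt : K.card < s.card :=
    Finset.card_lt_card (Finset.ssubset_iff_subset_ne.2 ⟨hK.subset, fun h => hxK (h ▸ hx)⟩)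
  have := hK.card_eq
  omega

theorem insert_of_forall_le [DecidableEq α] (hK : IsTopK k s K) {m : α} (hm : m ∈ s) (hmK : m ∉ K)
    (hmax : ∀ x ∈ s, x ∉ K → x ≤ m) : IsTopK (k + 1) s (insert m K) where
  subset := Finset.insert_subset hm hK.subset
  card_eq := by
    have card_insert : (insert m K).card = k + 1 := by
      rw [Finset.card_insert_of_notMem hmK, hK.card_eq_of_notMem hm hmK]
    have := Finset.card_le_card (Finset.insert_subset hm hK.subset)
    omega
  le_of_notMem x hx hxK y hy := by
    rw [Finset.mem_insert, not_or] at hxK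
    rcases Finset.mem_insert.1 hy with rfl | hyK
    · exact hmax x hx hxK.2
    · exact hK.le_of_notMem x hx hxK.2 y hyK

end LE

theorem le_of_notMem_of_subset {α : Type*} [Preorder α] {k : ℕ} {s t u K : Finset α}
    (ht : IsTopK k s t) (htu : t ⊆ u) (hK : IsTopK k u K) {x y : α} (hx : x ∈ s) (hxt : x ∉ t)
    (hy : y ∈ K) : x ≤ y := by
  by_cases htK : t ⊆ K
  · have card_le : K.card ≤ t.card := hK.card_le.trans_eq (ht.card_eq_of_notMem hx hxt).symm
    have t_eq_K : t = K := Finset.eq_of_subset_of_card_le htK card_le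
    exact ht.le_of_notMem x hx hxt y (t_eq_K ▸ hy)
  · obtain ⟨z, hzt, hzK⟩ := Finset.not_subset.1 htK
    calc
      x ≤ z := ht.le_of_notMem x hx hxt z hzt
      _ ≤ y := hK.le_of_notMem z (htu hzt) hzK y hy

section BiUnion

variable {α ι : Type*} [DecidableEq α] {k : ℕ} {I : Finset ι} {s t : ι → Finset α}

theorem min_card_biUnion_eq [LE α] (ht : ∀ i ∈ I, IsTopK k (s i) (t i)) :
    min k (I.biUnion t).card = min k (I.biUnion s).card := by
  have subset : I.biUnion t ⊆ I.biUnion s := Finset.biUnion_mono fun i hi => (ht i hi).subset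
  by_cases hst : I.biUnion s ⊆ I.biUnion t
  · rw [subset.antisymm hst]
  · obtain ⟨x, hxs, hxt⟩ := Finset.not_subset.1 hst
    obtain ⟨i, hi, hxi⟩ := Finset.mem_biUnion.1 hxs
    have k_le : k ≤ (I.biUnion t).card := calc
      k = (t i).card :=
        ((ht i hi).card_eq_of_notMem hxi fun h => hxt (Finset.mem_biUnion.2 ⟨i, hi, h⟩)).symm
      _ ≤ (I.biUnion t).card := Finset.card_le_card (Finset.subset_biUnion_of_mem t hi)
    rw [min_eq_left k_le, min_eq_left (k_le.trans (Finset.card_le_card subset))]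

theorem of_biUnion [Preorder α] {K : Finset α} (ht : ∀ i ∈ I, IsTopK k (s i) (t i))
    (hK : IsTopK k (I.biUnion t) K) : IsTopK k (I.biUnion s) K where
  subset := hK.subset.trans (Finset.biUnion_mono fun i hi => (ht i hi).subset)
  card_eq := hK.card_eq.trans (min_card_biUnion_eq ht)
  le_of_notMem x hx hxK y hy := by
    obtain ⟨i, hi, hxi⟩ := Finset.mem_biUnion.1 hx
    have t_subset : t i ⊆ I.biUnion t := Finset.subset_biUnion_of_mem t hi
    by_cases hxt : x ∈ t i
    · exact hK.le_of_notMem x (t_subset hxt) hxK y hy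
    · exact (ht i hi).le_of_notMem_of_subset t_subset hK hxi hxt hy

end BiUnion

end IsTopK

theorem exists_isTopK {α : Type*} [Preorder α] [Std.Total (α := α) (· ≤ ·)] (k : ℕ)
    (s : Finset α) : ∃ K, IsTopK k s K := by
  classical
  induction k with
  | zero => exact ⟨∅, by simp, by simp, by simp⟩
  | succ k ih =>
    obtain ⟨K, hK⟩ := ih
    by_cases hsK : s ⊆ K
    · exact ⟨s, .refl_of_card_le (((Finset.card_le_card hsK).trans hK.card_le).trans k.le_succ)⟩
    · obtain ⟨m, hm⟩ := (s \ K).exists_maximal (Finset.sdiff_nonempty.2 hsK)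
      obtain ⟨hms, hmK⟩ := Finset.mem_sdiff.1 hm.prop
      refine ⟨insert m K, hK.insert_of_forall_le hms hmK fun x hx hxK => ?_⟩
      exact (Std.Total.total x m).elim id (hm.le_of_ge (Finset.mem_sdiff.2 ⟨hx, hxK⟩))

theorem top_k_of_disjoint_union_general {α ι : Type*} [Preorder α] [Std.Total (α := α) (· ≤ ·)]
    [DecidableEq α] {k : ℕ} {I : Finset ι} {s t : ι → Finset α}
    (ht : ∀ i ∈ I, IsTopK k (s i) (t i)) :
    ∃ K ⊆ I.biUnion t, IsTopK k (I.biUnion s) K := by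
  obtain ⟨K, hK⟩ := exists_isTopK k (I.biUnion t)
  exact ⟨K, hK.subset, hK.of_biUnion ht⟩

/-- Let `s₁, …, s_q` be pairwise disjoint finite subsets of a linearly
ordered type with union `s`, and for each `i` let `Tᵢ ⊆ sᵢ` be a set of `k` largest
elements of `sᵢ`, i.e. `|Tᵢ| = min(k, |sᵢ|)` and every element of `sᵢ \ Tᵢ` is at most
every element of `Tᵢ`.  Then the union `T` of the `Tᵢ` contains a set `K` of `k` largest
elements of `s`: `K ⊆ T`, `|K| = min(k, |s|)`, and every element of `s \ K` is at most
every element of `K`. -/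
theorem top_k_of_disjoint_union {α : Type} [LinearOrder α] [DecidableEq α] (k q : ℕ)
    (sᵢ Tᵢ : Fin q → Finset α)
    (hdisj : ∀ i j : Fin q, i ≠ j → Disjoint (sᵢ i) (sᵢ j))
    (hsub : ∀ i : Fin q, Tᵢ i ⊆ sᵢ i)
    (hcard : ∀ i : Fin q, (Tᵢ i).card = min k (sᵢ i).card)
    (htop : ∀ i : Fin q, ∀ x ∈ sᵢ i \ Tᵢ i, ∀ y ∈ Tᵢ i, x ≤ y)
    (s T : Finset α)
    (hs : s = Finset.univ.biUnion sᵢ)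
    (hT : T = Finset.univ.biUnion Tᵢ) :
    ∃ K ⊆ T, K.card = min k s.card ∧ ∀ x ∈ s \ K, ∀ y ∈ K, x ≤ y := by
  subst hs hT
  obtain ⟨K, hKT, hK⟩ := top_k_of_disjoint_union_general (I := Finset.univ) fun i _ =>
    ⟨hsub i, hcard i, fun x hx hxT => htop i x (Finset.mem_sdiff.2 ⟨hx, hxT⟩)⟩
  exact ⟨K, hKT, hK.card_eq, fun x hx =>
    hK.le_of_notMem x (Finset.mem_sdiff.1 hx).1 (Finset.mem_sdiff.1 hx).2⟩
end
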